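/- Let K be a tetrahedron in ℝ³ with barycentric coordinates λ₁,λ₂,λ₃,λ₄ and bubble function b_K = λ₁λ₂λ₃λ₄. If a vector field v on K belongs to x × P₁(K;ℝ³) + b_K·P₁(K;ℝ³) and curl v = 0 on K, then v = 0. -/

import Mathlib

open MeasureTheory
open scoped Classical

noncomputable section

/-! ### Basic vector calculus on ℝ³ -/

abbrev Vec : Type := Fin 3 → ℝ
abbrev Mat : Type := Fin 3 → Fin 3 → ℝ

/-- Euclidean dot product on ℝ³. -/
def dot3 (v w : Vec) : ℝ := ∑ i, v i * w i
/-- squared Euclidean norm. -/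
def nsq3 (v : Vec) : ℝ := dot3 v v
/-- Euclidean norm. -/
def enorm3 (v : Vec) : ℝ := Real.sqrt (dot3 v v)
/-- normalization to a unit vector. -/
def normalize3 (v : Vec) : Vec := (enorm3 v)⁻¹ • v
/-- cross product on ℝ³. -/
def cross3 (v w : Vec) : Vec :=
  ![v 1 * w 2 - v 2 * w 1, v 2 * w 0 - v 0 * w 2, v 0 * w 1 - v 1 * w 0]
/-- Frobenius inner product of 3×3 matrices. -/
def dotM (A B : Mat) : ℝ := ∑ i, ∑ j, A i j * B i j
/-- squared Frobenius norm. -/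
def nsqM (A : Mat) : ℝ := dotM A A

/-- partial derivative ∂ᵢ of a scalar field. -/
def pd (i : Fin 3) (f : Vec → ℝ) (x : Vec) : ℝ := fderiv ℝ f x (Pi.single i 1)
/-- gradient of a scalar field. -/
def grad3 (f : Vec → ℝ) (x : Vec) : Vec := fun i => pd i f x
/-- curl of a vector field. -/
def curl3 (v : Vec → Vec) (x : Vec) : Vec :=
  ![pd 1 (fun y => v y 2) x - pd 2 (fun y => v y 1) x,
    pd 2 (fun y => v y 0) x - pd 0 (fun y => v y 2) x,
    pd 0 (fun y => v y 1) x - pd 1 (fun y => v y 0) x]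
/-- divergence of a vector field. -/
def div3 (v : Vec → Vec) (x : Vec) : ℝ := ∑ i, pd i (fun y => v y i) x
/-- Jacobian matrix of a vector field. -/
def jac3 (v : Vec → Vec) (x : Vec) : Mat := fun i j => pd j (fun y => v y i) x
/-- application of a matrix to a vector (e.g. normal derivative ∂ₙ). -/
def japply (J : Mat) (n : Vec) : Vec := fun i => ∑ j, J i j * n j

/-- iterated partial derivatives along a list of directions. -/
def pdIter : List (Fin 3) → (Vec → ℝ) → Vec → ℝ
  | [], f => f
  | i :: l, f => pd i (pdIter l f)

/-- `f` is (the function of) a polynomial of total degree at most `k`. -/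
def PolyDeg (k : ℕ) (f : Vec → ℝ) : Prop :=
  ∃ p : MvPolynomial (Fin 3) ℝ, p.totalDegree ≤ k ∧ ∀ x, f x = MvPolynomial.eval x p
/-- vector-valued polynomial of total degree at most `k`. -/
def VPolyDeg (k : ℕ) (v : Vec → Vec) : Prop := ∀ i, PolyDeg k fun x => v x i

/-! ### Tetrahedra -/

/-- A (nondegenerate) tetrahedron in ℝ³, given by its four vertices. -/
structure Tetra where
  vtx : Fin 4 → Vec
  indep : AffineIndependent ℝ vtx

namespace Tetra

/-- the tetrahedron as a closed subset of ℝ³. -/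
def K (T : Tetra) : Set Vec := convexHull ℝ (Set.range T.vtx)
/-- the edge joining vertices `i`, `j`. -/
def edge (T : Tetra) (i j : Fin 4) : Set Vec := segment ℝ (T.vtx i) (T.vtx j)
/-- a unit tangent vector of the edge joining vertices `i`, `j`. -/
def tangent (T : Tetra) (i j : Fin 4) : Vec := normalize3 (T.vtx j - T.vtx i)
/-- the face opposite to vertex `i`. -/
def face (T : Tetra) (i : Fin 4) : Set Vec := convexHull ℝ (T.vtx '' {j | j ≠ i})
/-- unit outward normal of the face opposite to vertex `i`. -/
def outNormal (T : Tetra) (i : Fin 4) : Vec :=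
  let a := T.vtx (i.succAbove 0)
  let u := cross3 (T.vtx (i.succAbove 1) - a) (T.vtx (i.succAbove 2) - a)
  (if 0 < dot3 u (T.vtx i - a) then (-1 : ℝ) else 1) • normalize3 u

/-- `lam` is the family of barycentric coordinates of `T`. -/
def IsBary (T : Tetra) (lam : Fin 4 → Vec → ℝ) : Prop :=
  (∀ i, PolyDeg 1 (lam i)) ∧ ∀ i j, lam i (T.vtx j) = if i = j then (1 : ℝ) else 0
/-- `b` is the (quartic) bubble function of `T`. -/
def IsBubble (T : Tetra) (b : Vec → ℝ) : Prop :=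
  ∃ lam, T.IsBary lam ∧ ∀ x, b x = ∏ i, lam i x

end Tetra

/-! ### Local shape function spaces -/

/-- the local space `W_k(K) = ∇P_{k+1}(K) ⊕ x × P₁(K;ℝ³) ⊕ b_K P₁(K;ℝ³)`. -/
def MemW (k : ℕ) (T : Tetra) (v : Vec → Vec) : Prop :=
  ∃ (q : Vec → ℝ) (p r : Vec → Vec) (b : Vec → ℝ), T.IsBubble b ∧
    PolyDeg (k + 1) q ∧ VPolyDeg 1 p ∧ VPolyDeg 1 r ∧
    ∀ x, v x = grad3 q x + cross3 x (p x) + b x • r x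

/-- the local Tai–Winther space `V^d(K) = P₁(K;ℝ³) ⊕ curl(b_K P₁(K;ℝ³))`. -/
def MemVd (T : Tetra) (v : Vec → Vec) : Prop :=
  ∃ (p r : Vec → Vec) (b : Vec → ℝ), T.IsBubble b ∧ VPolyDeg 1 p ∧ VPolyDeg 1 r ∧
    ∀ x, v x = p x + curl3 (fun y => b y • r y) x

/-- the local Nédélec space `V_k^{ND}(K) = ∇P_{k+1}(K) ⊕ x × P₁(K;ℝ³)`, `k = 1,2`. -/
def MemND (k : ℕ) (v : Vec → Vec) : Prop :=
  ∃ (q : Vec → ℝ) (p : Vec → Vec), PolyDeg (k + 1) q ∧ VPolyDeg 1 p ∧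
    ∀ x, v x = grad3 q x + cross3 x (p x)

/-- the face test space `RM_{k-2}(F) = P₀(F;ℝ²) ⊕ x^⊥ P_{k-2}(F)` on the face with
unit normal `n`; for `k = 1` this is just `P₀(F;ℝ²)`. -/
def MemRM (k : ℕ) (n : Vec) (q : Vec → Vec) : Prop :=
  ∃ (a : Vec) (c : ℝ), dot3 a n = 0 ∧ (k ≤ 1 → c = 0) ∧ ∀ x, q x = a + c • cross3 n x

/-- the face test space `RT(F) = P₀(F;ℝ²) ⊕ x P₀(F)` on the face with unit normal `n`. -/
def MemRT (n : Vec) (q : Vec → Vec) : Prop :=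
  ∃ (a : Vec) (c : ℝ), dot3 a n = 0 ∧ ∀ x, q x = a + c • (x - dot3 x n • n)

/-! ### Degrees of freedom -/

/-- edge moment `∫_e (v⋅t) q ds`. -/
def edgeMoment (T : Tetra) (a b : Fin 4) (v : Vec → Vec) (q : Vec → ℝ) : ℝ :=
  ∫ x in T.edge a b, dot3 (v x) (T.tangent a b) * q x ∂μH[1]
/-- tangential face moment `∫_F (v × n)⋅q dS`. -/
def faceTanMoment (T : Tetra) (a : Fin 4) (v : Vec → Vec) (q : Vec → Vec) : ℝ :=
  ∫ x in T.face a, dot3 (cross3 (v x) (T.outNormal a)) (q x) ∂μH[2]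
/-- normal face moment `∫_F (v⋅n) q dS`. -/
def faceNorMoment (T : Tetra) (a : Fin 4) (v : Vec → Vec) (q : Vec → ℝ) : ℝ :=
  ∫ x in T.face a, dot3 (v x) (T.outNormal a) * q x ∂μH[2]
/-- surface integral over a face. -/
def faceInt2 (T : Tetra) (a : Fin 4) (g : Vec → ℝ) : ℝ := ∫ x in T.face a, g x ∂μH[2]
/-- diameter of a face. -/
def hF (T : Tetra) (a : Fin 4) : ℝ := Metric.diam (T.face a)

/-! ### Meshes -/

/-- A face-to-face tetrahedral mesh. -/
structure Mesh where
  n : ℕ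
  npos : 0 < n
  el : Fin n → Tetra
  disj : ∀ i j, i ≠ j → interior (el i).K ∩ interior (el j).K = ∅
  conform : ∀ i j, i ≠ j → ∃ s e : Set (Fin 4),
    (el i).vtx '' s = (el j).vtx '' e ∧ (el i).K ∩ (el j).K = convexHull ℝ ((el i).vtx '' s)

namespace Mesh
/-- the open domain triangulated by the mesh. -/
def domain (M : Mesh) : Set Vec := interior (⋃ i, (M.el i).K)
/-- the mesh triangulates the (connected, polyhedral) domain `Ω`. -/
def Covers (M : Mesh) (Ω : Set Vec) : Prop :=
  Ω = M.domain ∧ closure Ω = (⋃ i, (M.el i).K) ∧ IsConnected Ω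
/-- the mesh size `h`. -/
def hsize (M : Mesh) : ℝ := ⨆ i, Metric.diam (M.el i).K
/-- shape regularity with constant `ρ`. -/
def ShapeReg (ρ : ℝ) (M : Mesh) : Prop :=
  ∀ i, ∃ x, Metric.ball x (ρ * Metric.diam (M.el i).K) ⊆ (M.el i).K
end Mesh

/-- A bounded polyhedral domain: a connected open set triangulated by some tetrahedral mesh. -/
def PolyhedralDomain (Ω : Set Vec) : Prop := ∃ M : Mesh, M.Covers Ω

/-- piecewise vector fields on a mesh (one smooth representative per element). -/
abbrev DiscVF (M : Mesh) := Fin M.n → Vec → Vec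
/-- piecewise scalar fields on a mesh. -/
abbrev DiscSF (M : Mesh) := Fin M.n → Vec → ℝ

/-- elementwise average (the `L²`-projection onto piecewise constants). -/
def avg (M : Mesh) (g : Vec → ℝ) (i : Fin M.n) : ℝ :=
  (∫ x in (M.el i).K, g x) / (volume (M.el i).K).toReal

/-! ### Global finite element spaces -/

/-- the `H(grad curl)`-nonconforming space `W_h`: piecewise `W_k(K)`, all DoFs
single-valued, and the edge DoFs and `RM`-face DoFs vanishing on `∂Ω`. -/
def MemWh (k : ℕ) (M : Mesh) (Ω : Set Vec) (u : DiscVF M) : Prop :=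
  (∀ i, MemW k (M.el i) (u i)) ∧
  (∀ i j a b c d, i ≠ j → (M.el i).edge a b = (M.el j).edge c d →
     ∀ q, PolyDeg k q → edgeMoment (M.el i) a b (u i) q = edgeMoment (M.el i) a b (u j) q) ∧
  (∀ i j a b, i ≠ j → (M.el i).face a = (M.el j).face b →
     ∀ q, MemRM k ((M.el i).outNormal a) q →
       faceTanMoment (M.el i) a (u i) q = faceTanMoment (M.el i) a (u j) q) ∧
  (∀ i j a b, i ≠ j → (M.el i).face a = (M.el j).face b →
     ∀ q, MemRT ((M.el i).outNormal a) q →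
       faceTanMoment (M.el i) a (curl3 (u i)) q = faceTanMoment (M.el i) a (curl3 (u j)) q) ∧
  (∀ i a b, (M.el i).edge a b ⊆ frontier Ω →
     ∀ q, PolyDeg k q → edgeMoment (M.el i) a b (u i) q = 0) ∧
  (∀ i a, (M.el i).face a ⊆ frontier Ω →
     ∀ q, MemRM k ((M.el i).outNormal a) q → faceTanMoment (M.el i) a (u i) q = 0)

/-- the space `W_{h0}`: all DoFs, including the curl-trace face DoFs, vanish on `∂Ω`. -/
def MemWh0 (k : ℕ) (M : Mesh) (Ω : Set Vec) (u : DiscVF M) : Prop :=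
  MemWh k M Ω u ∧
  ∀ i a, (M.el i).face a ⊆ frontier Ω →
    ∀ q, MemRT ((M.el i).outNormal a) q → faceTanMoment (M.el i) a (curl3 (u i)) q = 0

/-- the degree-`(k+1)` Lagrange space with zero boundary trace. -/
def MemVhg (k : ℕ) (M : Mesh) (Ω : Set Vec) (u : DiscSF M) : Prop :=
  (∀ i, PolyDeg (k + 1) (u i)) ∧
  (∀ i j, ∀ x ∈ (M.el i).K ∩ (M.el j).K, u i x = u j x) ∧
  (∀ i, ∀ x ∈ (M.el i).K ∩ frontier Ω, u i x = 0)

/-- the Tai–Winther space `V_h^d`: normal components continuous, tangential `RT`-moments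
single-valued, normal DoFs vanishing on `∂Ω`. -/
def MemVhd (M : Mesh) (Ω : Set Vec) (u : DiscVF M) : Prop :=
  (∀ i, MemVd (M.el i) (u i)) ∧
  (∀ i j a b, i ≠ j → (M.el i).face a = (M.el j).face b →
     (∀ q, PolyDeg 1 q → faceNorMoment (M.el i) a (u i) q = faceNorMoment (M.el i) a (u j) q) ∧
     (∀ q, MemRT ((M.el i).outNormal a) q →
       faceTanMoment (M.el i) a (u i) q = faceTanMoment (M.el i) a (u j) q)) ∧
  (∀ i a, (M.el i).face a ⊆ frontier Ω →
     ∀ q, PolyDeg 1 q → faceNorMoment (M.el i) a (u i) q = 0)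

/-- the Tai–Winther space `V_{h0}^d` with all DoFs vanishing on `∂Ω`. -/
def MemVh0d (M : Mesh) (Ω : Set Vec) (u : DiscVF M) : Prop :=
  MemVhd M Ω u ∧
  ∀ i a, (M.el i).face a ⊆ frontier Ω →
    ∀ q, MemRT ((M.el i).outNormal a) q → faceTanMoment (M.el i) a (u i) q = 0

/-- the piecewise-constant space `𝒬_h` with zero mean. -/
def MemQh (M : Mesh) (q : Fin M.n → ℝ) : Prop :=
  ∑ i, q i * (volume (M.el i).K).toReal = 0

/-- the Nédélec space with vanishing tangential boundary DoFs. -/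
def MemVND (k : ℕ) (M : Mesh) (Ω : Set Vec) (u : DiscVF M) : Prop :=
  (∀ i, MemND k (u i)) ∧
  (∀ i j a b c d, i ≠ j → (M.el i).edge a b = (M.el j).edge c d →
     ∀ q, PolyDeg k q → edgeMoment (M.el i) a b (u i) q = edgeMoment (M.el i) a b (u j) q) ∧
  (∀ i j a b, i ≠ j → (M.el i).face a = (M.el j).face b →
     ∀ q, MemRM k ((M.el i).outNormal a) q →
       faceTanMoment (M.el i) a (u i) q = faceTanMoment (M.el i) a (u j) q) ∧
  (∀ i a b, (M.el i).edge a b ⊆ frontier Ω →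
     ∀ q, PolyDeg k q → edgeMoment (M.el i) a b (u i) q = 0) ∧
  (∀ i a, (M.el i).face a ⊆ frontier Ω →
     ∀ q, MemRM k ((M.el i).outNormal a) q → faceTanMoment (M.el i) a (u i) q = 0)

/-- the lowest-order BDM space with vanishing normal boundary trace. -/
def MemVBDM (M : Mesh) (Ω : Set Vec) (u : DiscVF M) : Prop :=
  (∀ i, VPolyDeg 1 (u i)) ∧
  (∀ i j a b, i ≠ j → (M.el i).face a = (M.el j).face b →
     ∀ x ∈ (M.el i).face a, dot3 (u i x) ((M.el i).outNormal a) = dot3 (u j x) ((M.el i).outNormal a)) ∧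
  (∀ i a, (M.el i).face a ⊆ frontier Ω →
     ∀ x ∈ (M.el i).face a, dot3 (u i x) ((M.el i).outNormal a) = 0)

/-! ### Discrete norms and bilinear forms -/

/-- broken `L²` norm of a piecewise vector field. -/
def L2d (M : Mesh) (w : DiscVF M) : ℝ :=
  Real.sqrt (∑ i, ∫ x in (M.el i).K, nsq3 (w i x))
/-- `L²` norm of the (elementwise) curl. -/
def L2curl (M : Mesh) (w : DiscVF M) : ℝ :=
  Real.sqrt (∑ i, ∫ x in (M.el i).K, nsq3 (curl3 (w i) x))
/-- broken `H¹` seminorm of the curl, `|curl v|_{1,h}`. -/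
def semiCurl (M : Mesh) (w : DiscVF M) : ℝ :=
  Real.sqrt (∑ i, ∫ x in (M.el i).K, nsqM (jac3 (curl3 (w i)) x))
/-- the norm `‖v‖_{ε,h}`. -/
def epsNorm (ε : ℝ) (M : Mesh) (w : DiscVF M) : ℝ :=
  Real.sqrt ((L2d M w) ^ 2 + (L2curl M w) ^ 2 + ε ^ 2 * (semiCurl M w) ^ 2)
/-- broken `H¹` seminorm of a piecewise scalar field. -/
def semiGrad (M : Mesh) (μ : DiscSF M) : ℝ :=
  Real.sqrt (∑ i, ∫ x in (M.el i).K, nsq3 (grad3 (μ i) x))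

/-- `a_h(w,v) = Σ_K (∇curl w, ∇curl v)_K`. -/
def ah (M : Mesh) (w v : DiscVF M) : ℝ :=
  ∑ i, ∫ x in (M.el i).K, dotM (jac3 (curl3 (w i)) x) (jac3 (curl3 (v i)) x)
/-- `b(w,v) = (curl w, curl v)`. -/
def bh (M : Mesh) (w v : DiscVF M) : ℝ :=
  ∑ i, ∫ x in (M.el i).K, dot3 (curl3 (w i) x) (curl3 (v i) x)
/-- `c(v,μ) = (v, ∇μ)`. -/
def ch (M : Mesh) (v : DiscVF M) (μ : DiscSF M) : ℝ :=
  ∑ i, ∫ x in (M.el i).K, dot3 (v i x) (grad3 (μ i) x)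
/-- load functional `(f, v)`. -/
def fpair (M : Mesh) (f : Vec → Vec) (v : DiscVF M) : ℝ :=
  ∑ i, ∫ x in (M.el i).K, dot3 (f x) (v i x)

/-- `a_h(u, v_h)` with a continuous first argument, given by `J = ∇curl u`. -/
def ahC (M : Mesh) (J : Vec → Mat) (v : DiscVF M) : ℝ :=
  ∑ i, ∫ x in (M.el i).K, dotM (J x) (jac3 (curl3 (v i)) x)
/-- `b(u, v_h)` with a continuous first argument, given by `cu = curl u`. -/
def bhC (M : Mesh) (cu : Vec → Vec) (v : DiscVF M) : ℝ :=
  ∑ i, ∫ x in (M.el i).K, dot3 (cu x) (curl3 (v i) x)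

/-- broken `L²` distance between a function and a piecewise field. -/
def errL2 (M : Mesh) (v : Vec → Vec) (w : DiscVF M) : ℝ :=
  Real.sqrt (∑ i, ∫ x in (M.el i).K, nsq3 (v x - w i x))
/-- broken `L²` distance of curls, the first argument given by `cu = curl u`. -/
def errCurl (M : Mesh) (cu : Vec → Vec) (w : DiscVF M) : ℝ :=
  Real.sqrt (∑ i, ∫ x in (M.el i).K, nsq3 (cu x - curl3 (w i) x))
/-- broken `H¹` distance of curls, the first argument given by `J = ∇curl u`. -/
def errSemi (M : Mesh) (J : Vec → Mat) (w : DiscVF M) : ℝ :=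
  Real.sqrt (∑ i, ∫ x in (M.el i).K, nsqM (J x - jac3 (curl3 (w i)) x))
/-- error in the `‖·‖_{ε,h}` norm between `u` (with `curl u = cu`, `∇curl u = J`)
and a piecewise field `w`. -/
def errNorm (ε : ℝ) (M : Mesh) (u cu : Vec → Vec) (J : Vec → Mat) (w : DiscVF M) : ℝ :=
  Real.sqrt ((errL2 M u w) ^ 2 + (errCurl M cu w) ^ 2 + ε ^ 2 * (errSemi M J w) ^ 2)
/-- broken `H¹` distance between a function with Jacobian `J` and a piecewise field. -/
def errJac (M : Mesh) (J : Vec → Mat) (w : DiscVF M) : ℝ :=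
  Real.sqrt (∑ i, ∫ x in (M.el i).K, nsqM (J x - jac3 (w i) x))

/-- sum of a quantity over the boundary faces of the mesh. -/
def bdrySum (M : Mesh) (Ω : Set Vec) (g : Fin M.n → Fin 4 → ℝ) : ℝ :=
  ∑ i, ∑ a, if (M.el i).face a ⊆ frontier Ω then g i a else 0

/-- the boundary part `ε² Σ_{F⊆∂Ω} h_F⁻¹ ‖curl v‖²_F` of the Nitsche norm. -/
def tripExtra (ε : ℝ) (M : Mesh) (Ω : Set Vec) (v : DiscVF M) : ℝ :=
  ε ^ 2 * bdrySum M Ω fun i a =>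
    (hF (M.el i) a)⁻¹ * faceInt2 (M.el i) a fun x => nsq3 (curl3 (v i) x)
/-- the Nitsche norm `|||v|||_{ε,h}`. -/
def tripNorm (ε : ℝ) (M : Mesh) (Ω : Set Vec) (v : DiscVF M) : ℝ :=
  Real.sqrt ((epsNorm ε M v) ^ 2 + tripExtra ε M Ω v)
/-- error in the Nitsche norm `|||·|||_{ε,h}`. -/
def errTrip (ε : ℝ) (M : Mesh) (Ω : Set Vec) (u cu : Vec → Vec) (J : Vec → Mat)
    (w : DiscVF M) : ℝ :=
  Real.sqrt ((errNorm ε M u cu J w) ^ 2 + ε ^ 2 * bdrySum M Ω fun i a =>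
    (hF (M.el i) a)⁻¹ * faceInt2 (M.el i) a fun x => nsq3 (cu x - curl3 (w i) x))

/-- the Nitsche bilinear form `ã_h` on discrete functions. -/
def atildeD (σ : ℝ) (M : Mesh) (Ω : Set Vec) (w v : DiscVF M) : ℝ :=
  ah M w v
  - bdrySum M Ω (fun i a => faceInt2 (M.el i) a fun x =>
      dot3 (japply (jac3 (curl3 (w i)) x) ((M.el i).outNormal a)) (curl3 (v i) x))
  - bdrySum M Ω (fun i a => faceInt2 (M.el i) a fun x =>
      dot3 (curl3 (w i) x) (japply (jac3 (curl3 (v i)) x) ((M.el i).outNormal a)))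
  + bdrySum M Ω (fun i a => (σ / hF (M.el i) a) * faceInt2 (M.el i) a fun x =>
      dot3 (curl3 (w i) x) (curl3 (v i) x))

/-- the Nitsche form `ã_h(u, v_h)` with continuous first argument `u`
(`cu = curl u`, `J = ∇curl u`). -/
def atildeC (σ : ℝ) (M : Mesh) (Ω : Set Vec) (cu : Vec → Vec) (J : Vec → Mat)
    (v : DiscVF M) : ℝ :=
  ahC M J v
  - bdrySum M Ω (fun i a => faceInt2 (M.el i) a fun x =>
      dot3 (japply (J x) ((M.el i).outNormal a)) (curl3 (v i) x))
  - bdrySum M Ω (fun i a => faceInt2 (M.el i) a fun x =>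
      dot3 (cu x) (japply (jac3 (curl3 (v i)) x) ((M.el i).outNormal a)))
  + bdrySum M Ω (fun i a => (σ / hF (M.el i) a) * faceInt2 (M.el i) a fun x =>
      dot3 (cu x) (curl3 (v i) x))
/-! ### Sobolev spaces via weak (distributional) derivatives -/

/-- smooth compactly supported scalar test functions on ℝ³. -/
def TestS (φ : Vec → ℝ) : Prop := ContDiff ℝ (⊤ : ℕ∞) φ ∧ HasCompactSupport φ
/-- smooth compactly supported vector test functions on ℝ³. -/
def TestV (φ : Vec → Vec) : Prop := ContDiff ℝ (⊤ : ℕ∞) φ ∧ HasCompactSupport φ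

/-- extension by zero outside `Ω`. -/
def zextS (Ω : Set Vec) (f : Vec → ℝ) : Vec → ℝ := Ω.indicator f
/-- extension by zero outside `Ω` (vector-valued). -/
def zextV (Ω : Set Vec) (v : Vec → Vec) : Vec → Vec := Ω.indicator v

/-- membership in `L²(Ω)`. -/
def MemL2S (Ω : Set Vec) (f : Vec → ℝ) : Prop := MemLp f 2 (volume.restrict Ω)
/-- membership in `L²(Ω;ℝ³)`. -/
def MemL2V (Ω : Set Vec) (v : Vec → Vec) : Prop := MemLp v 2 (volume.restrict Ω)

/-- `L²(Ω)` norm. -/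
def L2SΩ (Ω : Set Vec) (f : Vec → ℝ) : ℝ := Real.sqrt (∫ x in Ω, (f x) ^ 2)
/-- `L²(Ω;ℝ³)` norm. -/
def L2VΩ (Ω : Set Vec) (v : Vec → Vec) : ℝ := Real.sqrt (∫ x in Ω, nsq3 (v x))

/-- `g = ∂ᵢ f` in the sense of distributions on all of ℝ³. -/
def WkPD (i : Fin 3) (f g : Vec → ℝ) : Prop :=
  ∀ φ, TestS φ → ∫ x, g x * φ x = -∫ x, f x * pd i φ x
/-- `w = curl v` in the sense of distributions on all of ℝ³. -/
def WkCurlAll (v w : Vec → Vec) : Prop :=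
  ∀ φ, TestV φ → ∫ x, dot3 (w x) (φ x) = ∫ x, dot3 (v x) (curl3 φ x)
/-- `d = div v` in the sense of distributions on all of ℝ³. -/
def WkDivAll (v : Vec → Vec) (d : Vec → ℝ) : Prop :=
  ∀ φ, TestS φ → ∫ x, d x * φ x = -∫ x, dot3 (v x) (grad3 φ x)

/-- `g = ∂ᵢ f` in the sense of distributions on `Ω`. -/
def WkPDIn (Ω : Set Vec) (i : Fin 3) (f g : Vec → ℝ) : Prop :=
  ∀ φ, TestS φ → tsupport φ ⊆ Ω → ∫ x in Ω, g x * φ x = -∫ x in Ω, f x * pd i φ x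
/-- `J` is the distributional Jacobian of `v` on `Ω`. -/
def WkJacIn (Ω : Set Vec) (v : Vec → Vec) (J : Vec → Mat) : Prop :=
  ∀ a b, WkPDIn Ω b (fun x => v x a) fun x => J x a b
/-- `g = ∂^α f` (`α` a list of directions) in the sense of distributions on `Ω`. -/
def WkIterIn (Ω : Set Vec) (l : List (Fin 3)) (f g : Vec → ℝ) : Prop :=
  ∀ φ, TestS φ → tsupport φ ⊆ Ω →
    ∫ x in Ω, g x * φ x = (-1 : ℝ) ^ l.length * ∫ x in Ω, f x * pdIter l φ x
/-- `div v = 0` in the sense of distributions on `Ω`. -/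
def WkDivFree (Ω : Set Vec) (v : Vec → Vec) : Prop :=
  ∀ φ, TestS φ → tsupport φ ⊆ Ω → ∫ x in Ω, dot3 (v x) (grad3 φ x) = 0

/-- scalar `H₀¹(Ω)` (via zero extension), with weak gradient `g`. -/
def MemH01S (Ω : Set Vec) (f : Vec → ℝ) (g : Vec → Vec) : Prop :=
  MemL2S Ω f ∧ MemL2V Ω g ∧ ∀ i, WkPD i (zextS Ω f) fun x => zextV Ω g x i
/-- `H₀(curl,Ω)` (via zero extension), with weak curl `cv`. -/
def MemH0Curl (Ω : Set Vec) (v cv : Vec → Vec) : Prop :=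
  MemL2V Ω v ∧ MemL2V Ω cv ∧ WkCurlAll (zextV Ω v) (zextV Ω cv)
/-- `H₀(div,Ω)` (via zero extension), with weak divergence `d`. -/
def MemH0Div (Ω : Set Vec) (v : Vec → Vec) (d : Vec → ℝ) : Prop :=
  MemL2V Ω v ∧ MemL2S Ω d ∧ WkDivAll (zextV Ω v) (zextS Ω d)
/-- vector `H₀¹(Ω;ℝ³)` (via zero extension), with weak Jacobian `J`. -/
def MemH01V (Ω : Set Vec) (v : Vec → Vec) (J : Vec → Mat) : Prop :=
  MemL2V Ω v ∧ (∀ a b, MemL2S Ω fun x => J x a b) ∧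
    ∀ a b, WkPD b (zextS Ω fun x => v x a) (zextS Ω fun x => J x a b)
/-- `H₀(grad curl, Ω)`: `u ∈ H₀(curl)` with `curl u = cu ∈ H₀¹(Ω;ℝ³)`, `J = ∇cu`. -/
def MemH0GC (Ω : Set Vec) (u cu : Vec → Vec) (J : Vec → Mat) : Prop :=
  MemH0Curl Ω u cu ∧ MemH01V Ω cu J

/-- membership in `H^j(Ω)` componentwise via iterated distributional derivatives `D`,
indexed by multi-indices `α : Fin j → Fin 3` and components `c : Fin 3`. -/
def MemHiter (Ω : Set Vec) (j : ℕ) (v : Vec → Vec)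
    (D : (Fin j → Fin 3) → Fin 3 → Vec → ℝ) : Prop :=
  ∀ α c, WkIterIn Ω (List.ofFn α) (fun x => v x c) (D α c) ∧ MemL2S Ω (D α c)
/-- the `H^j(Ω)` seminorm built from the iterated derivatives `D`. -/
def semiIter (Ω : Set Vec) (j : ℕ) (D : (Fin j → Fin 3) → Fin 3 → Vec → ℝ) : ℝ :=
  Real.sqrt (∑ α : Fin j → Fin 3, ∑ c : Fin 3, ∫ x in Ω, (D α c x) ^ 2)
/-- the `H¹(Ω)` seminorm of a vector field with Jacobian `J`. -/
def semiJ (Ω : Set Vec) (J : Vec → Mat) : ℝ := Real.sqrt (∫ x in Ω, nsqM (J x))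

/-- the `H^s(Ω)` seminorm, `1 ≤ s ≤ 2`, of a vector field with Jacobian `J` and second
derivatives `D2`; for `1 < s < 2` the Sobolev–Slobodeckij seminorm of the gradient. -/
def semiHsVec (Ω : Set Vec) (s : ℝ) (J : Vec → Mat)
    (D2 : (Fin 2 → Fin 3) → Fin 3 → Vec → ℝ) : ℝ :=
  if s = 1 then semiJ Ω J
  else if s = 2 then semiIter Ω 2 D2
  else Real.sqrt (∑ a : Fin 3, ∑ b : Fin 3,
    ∫ x in Ω, ∫ y in Ω, (J x a b - J y a b) ^ 2 / dist x y ^ (3 + 2 * (s - 1)))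
/-- membership in `H^s(Ω;ℝ³)`, `1 ≤ s ≤ 2`, with data `(J, D2)`. -/
def MemHsVec (Ω : Set Vec) (s : ℝ) (v : Vec → Vec) (J : Vec → Mat)
    (D2 : (Fin 2 → Fin 3) → Fin 3 → Vec → ℝ) : Prop :=
  WkJacIn Ω v J ∧ (∀ a b, MemL2S Ω fun x => J x a b) ∧
  (s = 2 → MemHiter Ω 2 v D2) ∧
  (1 < s → s < 2 → ∀ a b, Integrable
    (fun p : Vec × Vec => (J p.1 a b - J p.2 a b) ^ 2 / dist p.1 p.2 ^ (3 + 2 * (s - 1)))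
    ((volume.restrict Ω).prod (volume.restrict Ω)))

/-! ### The continuous problems -/

/-- weak solution of the quad-curl singular perturbation problem
`ε² curl⁴u + curl²u = f`, `div u = 0`, `u × n = curl u = 0` on `∂Ω`
(mixed formulation with multiplier `λ = 0`): here `cu = curl u`, `J = ∇curl u`. -/
def IsQuadCurlSol (Ω : Set Vec) (ε : ℝ) (f u cu : Vec → Vec) (J : Vec → Mat) : Prop :=
  MemH0GC Ω u cu J ∧ WkDivFree Ω u ∧
  ∀ v cv Jv, MemH0GC Ω v cv Jv →
    ε ^ 2 * (∫ x in Ω, dotM (J x) (Jv x)) + (∫ x in Ω, dot3 (cu x) (cv x))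
      = ∫ x in Ω, dot3 (f x) (v x)

/-- weak solution of the reduced double curl problem
`curl²u₀ = f`, `div u₀ = 0`, `u₀ × n = 0` on `∂Ω`; here `cu0 = curl u₀`. -/
def IsReducedSol (Ω : Set Vec) (f u0 cu0 : Vec → Vec) : Prop :=
  MemH0Curl Ω u0 cu0 ∧ WkDivFree Ω u0 ∧
  ∀ v cv, MemH0Curl Ω v cv →
    (∫ x in Ω, dot3 (cu0 x) (cv x)) = ∫ x in Ω, dot3 (f x) (v x)

/-- the continuous mixed formulation: `u ∈ H₀(grad curl)`, `λ ∈ H₀¹`,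
`ε²a(u,v) + b(u,v) + c(v,λ) = (f,v)` and `c(u,μ) = 0`. -/
def MixedSol (Ω : Set Vec) (ε : ℝ) (f u cu : Vec → Vec) (J : Vec → Mat)
    (lam : Vec → ℝ) (glam : Vec → Vec) : Prop :=
  MemH0GC Ω u cu J ∧ MemH01S Ω lam glam ∧
  (∀ v cv Jv, MemH0GC Ω v cv Jv →
    ε ^ 2 * (∫ x in Ω, dotM (J x) (Jv x)) + (∫ x in Ω, dot3 (cu x) (cv x))
      + (∫ x in Ω, dot3 (v x) (glam x)) = ∫ x in Ω, dot3 (f x) (v x)) ∧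
  (∀ μ gμ, MemH01S Ω μ gμ → ∫ x in Ω, dot3 (u x) (gμ x) = 0)

/-! ### Discrete methods -/

/-- the mixed finite element method (4.1)-(4.2). -/
def DiscMixedSol (k : ℕ) (M : Mesh) (Ω : Set Vec) (ε : ℝ) (f : Vec → Vec)
    (u : DiscVF M) (lam : DiscSF M) : Prop :=
  MemWh0 k M Ω u ∧ MemVhg k M Ω lam ∧
  (∀ v, MemWh0 k M Ω v → ε ^ 2 * ah M u v + bh M u v + ch M v lam = fpair M f v) ∧
  (∀ μ, MemVhg k M Ω μ → ch M u μ = 0)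

/-- the Nitsche-modified mixed finite element method (5.1)-(5.2). -/
def DiscNitscheSol (k : ℕ) (M : Mesh) (Ω : Set Vec) (σ ε : ℝ) (f : Vec → Vec)
    (u : DiscVF M) (lam : DiscSF M) : Prop :=
  MemWh k M Ω u ∧ MemVhg k M Ω lam ∧
  (∀ v, MemWh k M Ω v →
    ε ^ 2 * atildeD σ M Ω u v + bh M u v + ch M v lam = fpair M f v) ∧
  (∀ μ, MemVhg k M Ω μ → ch M u μ = 0)

/-! ### Falk–Winther projections and derived interpolation operators -/

/-- The Falk–Winther local bounded commuting projections onto the Lagrange, Nédélec and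
BDM spaces, together with the properties used in the paper. `avg` plays the role of the
projection `Q_h` onto piecewise constants. -/
structure FW (k : ℕ) (M : Mesh) (Ω : Set Vec) where
  Ig : (Vec → ℝ) → DiscSF M
  IND : (Vec → Vec) → DiscVF M
  IBDM : (Vec → Vec) → DiscVF M
  mapsIg : ∀ v gv, MemH01S Ω v gv → MemVhg k M Ω (Ig v)
  mapsIND : ∀ v cv, MemH0Curl Ω v cv → MemVND k M Ω (IND v)
  mapsIBDM : ∀ v dv, MemH0Div Ω v dv → MemVBDM M Ω (IBDM v)
  zeroIBDM : ∀ i x, IBDM (fun _ => (0 : Vec)) i x = 0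
  comm_grad : ∀ v gv, MemH01S Ω v gv → ∀ i, ∀ x ∈ (M.el i).K, IND gv i x = grad3 (Ig v i) x
  comm_curl : ∀ v cv, MemH0Curl Ω v cv → ∀ i, ∀ x ∈ (M.el i).K, IBDM cv i x = curl3 (IND v i) x
  comm_div : ∀ v dv, MemH0Div Ω v dv → ∀ i, ∀ x ∈ (M.el i).K, div3 (IBDM v i) x = avg M dv i

/-- DoF-matching conditions defining the interpolations `I_{h0}^d`, `I_h^d` into the
Tai–Winther spaces relative to a given piecewise field `B` (namely `I_h^{BDM}v`): the
normal face DoFs match, and on interior faces the tangential DoFs match the face average. -/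
def MatchIdInt (M : Mesh) (B w : DiscVF M) : Prop :=
  (∀ i a, ∀ q, PolyDeg 1 q → faceNorMoment (M.el i) a (w i) q = faceNorMoment (M.el i) a (B i) q) ∧
  (∀ i j a b, i ≠ j → (M.el i).face a = (M.el j).face b →
    ∀ q, MemRT ((M.el i).outNormal a) q →
      faceTanMoment (M.el i) a (w i) q
        = (faceTanMoment (M.el i) a (B i) q + faceTanMoment (M.el i) a (B j) q) / 2)

/-- `w = I_{h0}^d v` where `B = I_h^{BDM} v`. -/
def IsId0 (M : Mesh) (Ω : Set Vec) (B w : DiscVF M) : Prop :=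
  MemVh0d M Ω w ∧ MatchIdInt M B w

/-- `w = I_h^d v` where `B = I_h^{BDM} v`: additionally the tangential DoFs on boundary
faces match those of `B`. -/
def IsId (M : Mesh) (Ω : Set Vec) (B w : DiscVF M) : Prop :=
  MemVhd M Ω w ∧ MatchIdInt M B w ∧
  ∀ i a, (M.el i).face a ⊆ frontier Ω →
    ∀ q, MemRT ((M.el i).outNormal a) q →
      faceTanMoment (M.el i) a (w i) q = faceTanMoment (M.el i) a (B i) q

/-- DoF-matching conditions defining `I_{h0}^{gc}`, `I_h^{gc}` relative to a given
piecewise field `N` (namely `I_h^{ND}v`). -/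
def MatchIgcInt (k : ℕ) (M : Mesh) (N w : DiscVF M) : Prop :=
  (∀ i a b, a ≠ b → ∀ q, PolyDeg k q →
     edgeMoment (M.el i) a b (w i) q = edgeMoment (M.el i) a b (N i) q) ∧
  (∀ i a, ∀ q, MemRM k ((M.el i).outNormal a) q →
     faceTanMoment (M.el i) a (w i) q = faceTanMoment (M.el i) a (N i) q) ∧
  (∀ i j a b, i ≠ j → (M.el i).face a = (M.el j).face b →
    ∀ q, MemRT ((M.el i).outNormal a) q →
      faceTanMoment (M.el i) a (curl3 (w i)) q
        = (faceTanMoment (M.el i) a (curl3 (N i)) q + faceTanMoment (M.el i) a (curl3 (N j)) q) / 2)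

/-- `w = I_{h0}^{gc} v` where `N = I_h^{ND} v`. -/
def IsIgc0 (k : ℕ) (M : Mesh) (Ω : Set Vec) (N w : DiscVF M) : Prop :=
  MemWh0 k M Ω w ∧ MatchIgcInt k M N w

/-- `w = I_h^{gc} v` where `N = I_h^{ND} v`. -/
def IsIgc (k : ℕ) (M : Mesh) (Ω : Set Vec) (N w : DiscVF M) : Prop :=
  MemWh k M Ω w ∧ MatchIgcInt k M N w ∧
  ∀ i a, (M.el i).face a ⊆ frontier Ω →
    ∀ q, MemRT ((M.el i).outNormal a) q →
      faceTanMoment (M.el i) a (curl3 (w i)) q = faceTanMoment (M.el i) a (curl3 (N i)) q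

/-- `B` maps `H₀(div,Ω)` into the BDM space. -/
def BDMmaps (M : Mesh) (Ω : Set Vec) (B : (Vec → Vec) → DiscVF M) : Prop :=
  ∀ v dv, MemH0Div Ω v dv → MemVBDM M Ω (B v)
/-- the Falk–Winther `L²`-bound `‖I_h^{BDM}v‖₀ ≲ ‖v‖₀ + h‖div v‖₀`. -/
def BDMbound (M : Mesh) (Ω : Set Vec) (B : (Vec → Vec) → DiscVF M) (C₀ : ℝ) : Prop :=
  ∀ v dv, MemH0Div Ω v dv → L2d M (B v) ≤ C₀ * (L2VΩ Ω v + M.hsize * L2SΩ Ω dv)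
/-- the elementwise Falk–Winther error estimates
`Σ_K h_K^{2(i-j)} |v - I_h^{BDM}v|²_{i,K} ≲ |v|_j²` for `i = 0,1`, `j = 1,2`. -/
def BDMest (M : Mesh) (Ω : Set Vec) (B : (Vec → Vec) → DiscVF M) (C₀ : ℝ) : Prop :=
  (∀ v dv Jv, MemH0Div Ω v dv → WkJacIn Ω v Jv →
     (∑ i, (Metric.diam (M.el i).K) ^ (-2 : ℝ) * ∫ x in (M.el i).K, nsq3 (v x - B v i x))
       + (∑ i, ∫ x in (M.el i).K, nsqM (Jv x - jac3 (B v i) x)) ≤ C₀ * (semiJ Ω Jv) ^ 2) ∧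
  (∀ v dv Jv D2, MemH0Div Ω v dv → WkJacIn Ω v Jv → MemHiter Ω 2 v D2 →
     (∑ i, (Metric.diam (M.el i).K) ^ (-4 : ℝ) * ∫ x in (M.el i).K, nsq3 (v x - B v i x))
       + (∑ i, (Metric.diam (M.el i).K) ^ (-2 : ℝ) * ∫ x in (M.el i).K, nsqM (Jv x - jac3 (B v i) x))
       ≤ C₀ * (semiIter Ω 2 D2) ^ 2)

/-! ### Subspaces for the dimension count -/

/-- the subspace `∇P_{k+1}` of vector fields. -/
def gradSpace (k : ℕ) : Submodule ℝ (Vec → Vec) :=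
  Submodule.span ℝ {v | ∃ q, PolyDeg (k + 1) q ∧ v = fun x => grad3 q x}
/-- the subspace `x × P₁(ℝ³;ℝ³)`. -/
def crossSpace : Submodule ℝ (Vec → Vec) :=
  Submodule.span ℝ {v | ∃ p, VPolyDeg 1 p ∧ v = fun x => cross3 x (p x)}
/-- the subspace `b_K P₁(ℝ³;ℝ³)`. -/
def bubbleSpace (T : Tetra) : Submodule ℝ (Vec → Vec) :=
  Submodule.span ℝ {v | ∃ b r, T.IsBubble b ∧ VPolyDeg 1 r ∧ v = fun x => b x • r x}

/-!
Write `v = x × p + b r` with `p`, `r` affine. Then `curl (x × p) = (tr ∇p) x - (∇p) x - 2 p` is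
again affine. At a vertex three of the factors of `b` vanish, so `b` and `∇b` vanish there, and
`curl v = 0` forces the affine field `curl (x × p)` to vanish at the four vertices, hence
everywhere. At `x = 0` this gives `p 0 = 0`; then `p x = (∇p) x` is a multiple of `x`, so
`x × p = 0`.

What remains is `curl (b r) = 0`. On the relative interior of the face `λᵢ = 0` the curl of `b r`
is `∏_{j ≠ i} λⱼ` times `∇λᵢ × r`, so `∇λᵢ × r` vanishes on that face. A vertex lies on three
faces, and `r` cannot be parallel to two different `∇λᵢ` there unless it is zero; so the affine
field `r` vanishes at every vertex.
-/

section AffineMaps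

lemma exists_affineMap_eq_prod_pow {σ R : Type*} [CommRing R] {d : σ →₀ ℕ}
    (hd : d.degree ≤ 1) :
    ∃ g : (σ → R) →ᵃ[R] R, ⇑g = fun x => d.prod fun i k => x i ^ k := by
  rcases Nat.le_one_iff_eq_zero_or_eq_one.mp hd with h | h
  · obtain rfl := (Finsupp.degree_eq_zero_iff d).mp h
    exact ⟨AffineMap.const R _ 1, by ext; simp⟩
  · obtain ⟨i, rfl⟩ := (Finsupp.sum_eq_one_iff d).mp h
    exact ⟨AffineMap.proj i, by ext; simp⟩

theorem exists_affineMap_eq_eval {σ R : Type*} [CommRing R] {p : MvPolynomial σ R}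
    (hp : p.totalDegree ≤ 1) :
    ∃ g : (σ → R) →ᵃ[R] R, ⇑g = fun x => MvPolynomial.eval x p := by
  have hsum : (fun x => MvPolynomial.eval x p)
      = ∑ d ∈ p.support, fun x : σ → R => p.coeff d * d.prod fun i k => x i ^ k := by
    ext x
    simp only [MvPolynomial.eval_eq, Finsupp.prod, Finset.sum_apply]
  rw [hsum]
  refine Finset.sum_induction _ (fun f => ∃ g : (σ → R) →ᵃ[R] R, ⇑g = f) ?_ ⟨0, rfl⟩ ?_
  · rintro _ _ ⟨g, rfl⟩ ⟨h, rfl⟩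
    exact ⟨g + h, rfl⟩
  · intro d hd
    obtain ⟨g, hg⟩ := exists_affineMap_eq_prod_pow (R := R)
      ((MvPolynomial.le_totalDegree hd).trans hp)
    exact ⟨p.coeff d • g, funext fun x => congrArg (p.coeff d * ·) (congrFun hg x)⟩

theorem PolyDeg.exists_affineMap {f : Vec → ℝ} (hf : PolyDeg 1 f) :
    ∃ g : Vec →ᵃ[ℝ] ℝ, ⇑g = f := by
  obtain ⟨p, hp, hfp⟩ := hf
  obtain ⟨g, hg⟩ := exists_affineMap_eq_eval hp
  exact ⟨g, hg.trans (funext hfp).symm⟩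

theorem VPolyDeg.exists_affineMap {v : Vec → Vec} (hv : VPolyDeg 1 v) :
    ∃ g : Vec →ᵃ[ℝ] Vec, ⇑g = v := by
  choose g hg using fun i => (hv i).exists_affineMap
  exact ⟨AffineMap.pi g, funext fun x => funext fun i => congrFun (hg i) x⟩

lemma hasFDerivAt_affineMap {𝕜 E F : Type*} [NontriviallyNormedField 𝕜] [CompleteSpace 𝕜]
    [NormedAddCommGroup E] [NormedSpace 𝕜 E] [FiniteDimensional 𝕜 E]
    [NormedAddCommGroup F] [NormedSpace 𝕜 F] (g : E →ᵃ[𝕜] F) (x : E) :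
    HasFDerivAt g (LinearMap.toContinuousLinearMap g.linear) x :=
  (⟨g, g.continuous_of_finiteDimensional⟩ : E →ᴬ[𝕜] F).hasFDerivAt

end AffineMaps

section CrossProduct

lemma cross3_eq_crossProduct (v w : Vec) : cross3 v w = crossProduct v w :=
  (cross_apply v w).symm

lemma dot3_eq_dotProduct (v w : Vec) : dot3 v w = v ⬝ᵥ w := rfl

lemma dot3_smul_eq_of_cross3_eq_zero {g w : Vec} (h : cross3 g w = 0) (f : Vec) :
    dot3 f w • g = dot3 g f • w := by
  rw [cross3_eq_crossProduct] at h
  rw [dot3_eq_dotProduct, dot3_eq_dotProduct, ← sub_eq_zero,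
    ← cross_cross_eq_smul_sub_smul', h, map_zero]

theorem eq_zero_of_cross3_eq_zero {g h w f : Vec} (hg : g ≠ 0) (hgw : cross3 g w = 0)
    (hhw : cross3 h w = 0) (hgf : dot3 g f = 0) (hhf : dot3 h f ≠ 0) : w = 0 := by
  have hfw : dot3 f w = 0 := by
    have := dot3_smul_eq_of_cross3_eq_zero hgw f
    rw [hgf, zero_smul] at this
    exact (smul_eq_zero.mp this).resolve_right hg
  have := dot3_smul_eq_of_cross3_eq_zero hhw f
  rw [hfw, zero_smul] at this
  exact (smul_eq_zero.mp this.symm).resolve_left hhf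

end CrossProduct

section VectorCalculus

variable {f g : Vec → ℝ} {u w : Vec → Vec} {x : Vec}

lemma pd_add (hf : DifferentiableAt ℝ f x) (hg : DifferentiableAt ℝ g x) (i : Fin 3) :
    pd i (fun y => f y + g y) x = pd i f x + pd i g x := by
  simp only [pd, fderiv_fun_add hf hg, add_apply]

lemma pd_sub (hf : DifferentiableAt ℝ f x) (hg : DifferentiableAt ℝ g x) (i : Fin 3) :
    pd i (fun y => f y - g y) x = pd i f x - pd i g x := by
  simp only [pd, fderiv_fun_sub hf hg, sub_apply]

lemma pd_mul (hf : DifferentiableAt ℝ f x) (hg : DifferentiableAt ℝ g x) (i : Fin 3) :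
    pd i (fun y => f y * g y) x = f x * pd i g x + pd i f x * g x := by
  simp only [pd, fderiv_fun_mul hf hg, add_apply, smul_apply, smul_eq_mul, mul_comm (g x)]

lemma pd_coord (i j : Fin 3) (x : Vec) : pd i (fun y => y j) x = if i = j then 1 else 0 := by
  rw [pd, fderiv_apply differentiableAt_fun_id, fderiv_fun_id]
  simp [Pi.single_apply, eq_comm]

lemma pd_apply (hu : DifferentiableAt ℝ u x) (i j : Fin 3) :
    pd i (fun y => u y j) x = fderiv ℝ u x (Pi.single i 1) j := by
  rw [pd, fderiv_apply hu]
  rfl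

lemma dot3_grad3 (f : Vec → ℝ) (x w : Vec) : dot3 (grad3 f x) w = fderiv ℝ f x w := by
  conv_rhs => rw [pi_eq_sum_univ' w, map_sum]
  simp only [dot3, grad3, pd, map_smul, smul_eq_mul, mul_comm]

lemma japply_jac3 (hu : DifferentiableAt ℝ u x) (w : Vec) :
    japply (jac3 u x) w = fderiv ℝ u x w := by
  ext i
  have := dot3_grad3 (fun y => u y i) x w
  rw [fderiv_apply hu] at this
  exact this

lemma div3_eq_trace_fderiv (hu : DifferentiableAt ℝ u x) :
    div3 u x = LinearMap.trace ℝ Vec (fderiv ℝ u x) := by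
  rw [LinearMap.trace_eq_matrix_trace ℝ (Pi.basisFun ℝ (Fin 3))]
  simp [div3, pd_apply hu, Matrix.trace]

lemma differentiableAt_cross3 (hu : DifferentiableAt ℝ u x) (hw : DifferentiableAt ℝ w x) :
    DifferentiableAt ℝ (fun y => cross3 (u y) (w y)) x := by
  rw [differentiableAt_pi] at hu hw ⊢
  rw [Fin.forall_fin_succ, Fin.forall_fin_two]
  exact ⟨((hu 1).mul (hw 2)).sub ((hu 2).mul (hw 1)), ((hu 2).mul (hw 0)).sub ((hu 0).mul (hw 2)),
    ((hu 0).mul (hw 1)).sub ((hu 1).mul (hw 0))⟩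

theorem curl3_add (hu : DifferentiableAt ℝ u x) (hw : DifferentiableAt ℝ w x) :
    curl3 (fun y => u y + w y) x = curl3 u x + curl3 w x := by
  have hu' := differentiableAt_pi.mp hu
  have hw' := differentiableAt_pi.mp hw
  ext k
  fin_cases k <;> simp [curl3, pd_add, hu', hw', add_sub_add_comm]

theorem curl3_smul (hf : DifferentiableAt ℝ f x) (hu : DifferentiableAt ℝ u x) :
    curl3 (fun y => f y • u y) x = f x • curl3 u x + cross3 (grad3 f x) (u x) := by
  have hu' := differentiableAt_pi.mp hu
  ext k
  fin_cases k <;>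
    simp only [curl3, cross3, grad3, pd_mul, hf, hu', Pi.add_apply, Pi.smul_apply, smul_eq_mul,
      Fin.zero_eta, Fin.mk_one, Fin.reduceFinMk, Matrix.cons_val] <;> ring

theorem curl3_cross3_id (hu : DifferentiableAt ℝ u x) :
    curl3 (fun y => cross3 y (u y)) x
      = div3 u x • x - (2 : ℝ) • u x - japply (jac3 u x) x := by
  have hu' := differentiableAt_pi.mp hu
  have hx (j : Fin 3) : DifferentiableAt ℝ (fun y : Vec => y j) x := by fun_prop
  have hmul (i j k : Fin 3) : pd k (fun y => y i * u y j - y j * u y i) x =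
      (x i * pd k (fun y => u y j) x + (if k = i then 1 else 0) * u x j)
        - (x j * pd k (fun y => u y i) x + (if k = j then 1 else 0) * u x i) := by
    rw [pd_sub ((hx i).fun_mul (hu' j)) ((hx j).fun_mul (hu' i)), pd_mul (hx i) (hu' j),
      pd_mul (hx j) (hu' i), pd_coord, pd_coord]
  ext k
  fin_cases k <;>
    simp only [curl3, cross3, div3, japply, jac3, hmul, Fin.sum_univ_three, Pi.sub_apply,
      Pi.smul_apply, smul_eq_mul, Fin.zero_eta, Fin.mk_one, Fin.reduceFinMk, Matrix.cons_val,
      Fin.reduceEq, zero_ne_one, one_ne_zero, ↓reduceIte, zero_mul, one_mul, add_zero] <;> ring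

theorem fderiv_finsetProd_of_eq_zero {𝕜 E ι : Type*} [NontriviallyNormedField 𝕜]
    [NormedAddCommGroup E] [NormedSpace 𝕜 E] [DecidableEq ι] {s : Finset ι} {g : ι → E → 𝕜} {x : E}
    (hg : ∀ j ∈ s, DifferentiableAt 𝕜 (g j) x) {i : ι} (hi : i ∈ s) (h0 : g i x = 0) :
    fderiv 𝕜 (fun y => ∏ j ∈ s, g j y) x = (∏ j ∈ s.erase i, g j x) • fderiv 𝕜 (g i) x := by
  rw [fderiv_finsetProd hg]
  refine Finset.sum_eq_single_of_mem i hi fun k _ hki => ?_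
  rw [Finset.prod_eq_zero (Finset.mem_erase.mpr ⟨hki.symm, hi⟩) h0]
  exact zero_smul 𝕜 (fderiv 𝕜 (g k) x)

end VectorCalculus

section AffineFields

lemma grad3_affineMap_eq (g : Vec →ᵃ[ℝ] ℝ) (x y : Vec) : grad3 g x = grad3 g y := by
  ext i
  simp only [grad3, pd, (hasFDerivAt_affineMap g _).fderiv]

/-- The field `curl (x × p)` of an affine field `p`, as an affine map. -/
def curlCross3 (p : Vec →ᵃ[ℝ] Vec) : Vec →ᵃ[ℝ] Vec :=
  (LinearMap.trace ℝ Vec p.linear • LinearMap.id - p.linear).toAffineMap - (2 : ℝ) • p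

lemma curlCross3_apply (p : Vec →ᵃ[ℝ] Vec) (x : Vec) :
    curlCross3 p x = LinearMap.trace ℝ Vec p.linear • x - p.linear x - (2 : ℝ) • p x := rfl

lemma curl3_cross3_affineMap (p : Vec →ᵃ[ℝ] Vec) (x : Vec) :
    curl3 (fun y => cross3 y (p y)) x = curlCross3 p x := by
  have hp := hasFDerivAt_affineMap p x
  rw [curl3_cross3_id hp.differentiableAt, japply_jac3 hp.differentiableAt,
    div3_eq_trace_fderiv hp.differentiableAt, hp.fderiv, curlCross3_apply, sub_right_comm]
  rfl

theorem cross3_eq_zero_of_curlCross3_eq_zero {p : Vec →ᵃ[ℝ] Vec} (h : curlCross3 p = 0)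
    (x : Vec) : cross3 x (p x) = 0 := by
  have hcurl (y : Vec) :
      LinearMap.trace ℝ Vec p.linear • y - p.linear y - (2 : ℝ) • p y = 0 := by
    rw [← curlCross3_apply, h, AffineMap.coe_zero, Pi.zero_apply]
  have h0 : p 0 = 0 := by simpa using hcurl 0
  have hlin : p.linear x = p x := by simpa [h0] using p.linearMap_vsub x 0
  have hpx : p x = (LinearMap.trace ℝ Vec p.linear / 3) • x := by
    have := hcurl x
    rw [hlin] at this
    linear_combination (norm := module) (-1 / 3 : ℝ) • this
  rw [hpx, cross3_eq_crossProduct, map_smul, cross_self, smul_zero]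

end AffineFields

namespace Tetra

variable (T : Tetra)

/-- The vertices of `T` as an affine basis of `ℝ³`; its coordinates are the barycentric
coordinates of `T`. -/
def affineBasis : AffineBasis (Fin 4) ℝ Vec where
  toFun := T.vtx
  ind' := T.indep
  tot' := by
    rw [T.indep.affineSpan_eq_top_iff_card_eq_finrank_add_one]
    simp

/-- The bubble function of `T`, the product of its four barycentric coordinates. -/
def bubble (x : Vec) : ℝ := ∏ i, T.affineBasis.coord i x

variable {T}

theorem affineMap_ext {W : Type*} [AddCommGroup W] [Module ℝ W] {f g : Vec →ᵃ[ℝ] W}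
    (h : ∀ a, f (T.vtx a) = g (T.vtx a)) : f = g :=
  AffineMap.ext_on T.affineBasis.tot (Set.forall_mem_range.mpr h)

lemma IsBary.eq_coord {lam : Fin 4 → Vec → ℝ} (hlam : T.IsBary lam) (i : Fin 4) :
    lam i = T.affineBasis.coord i := by
  obtain ⟨g, hg⟩ := (hlam.1 i).exists_affineMap
  have hgi : g = T.affineBasis.coord i := affineMap_ext fun a => by
    rw [hg, hlam.2]
    exact (T.affineBasis.coord_apply i a).symm
  rw [← hg, hgi]

lemma mem_K_iff {x : Vec} : x ∈ T.K ↔ ∀ i, 0 ≤ T.affineBasis.coord i x :=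
  Set.ext_iff.mp T.affineBasis.convexHull_eq_nonneg_coord x

lemma vtx_mem_K (a : Fin 4) : T.vtx a ∈ T.K :=
  subset_convexHull ℝ _ (Set.mem_range_self a)

lemma differentiableAt_coord (i : Fin 4) (x : Vec) :
    DifferentiableAt ℝ (T.affineBasis.coord i) x :=
  (hasFDerivAt_affineMap _ x).differentiableAt

lemma differentiableAt_bubble (x : Vec) : DifferentiableAt ℝ T.bubble x :=
  (HasFDerivAt.finsetProd fun i _ =>
    (differentiableAt_coord i x).hasFDerivAt).differentiableAt

lemma dot3_grad3_coord (i a b : Fin 4) (x : Vec) :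
    dot3 (grad3 (T.affineBasis.coord i) x) (T.vtx b - T.vtx a)
      = (if i = b then 1 else 0) - if i = a then 1 else 0 := by
  rw [dot3_grad3, (hasFDerivAt_affineMap _ x).fderiv, LinearMap.coe_toContinuousLinearMap',
    ← vsub_eq_sub, AffineMap.linearMap_vsub]
  exact congrArg₂ _ (T.affineBasis.coord_apply i b) (T.affineBasis.coord_apply i a)

lemma grad3_coord_ne_zero (i : Fin 4) (x : Vec) : grad3 (T.affineBasis.coord i) x ≠ 0 := by
  obtain ⟨a, ha⟩ := exists_ne i
  intro h
  have := dot3_grad3_coord (T := T) i a i x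
  simp [h, ha.symm, dot3] at this

lemma bubble_eq_zero {i : Fin 4} {x : Vec} (hx : T.affineBasis.coord i x = 0) :
    T.bubble x = 0 :=
  Finset.prod_eq_zero (Finset.mem_univ i) hx

lemma grad3_bubble_of_coord_eq_zero {i : Fin 4} {x : Vec} (hx : T.affineBasis.coord i x = 0) :
    grad3 T.bubble x
      = (∏ j ∈ Finset.univ.erase i, T.affineBasis.coord j x) • grad3 (T.affineBasis.coord i) x := by
  ext k
  exact DFunLike.congr_fun (fderiv_finsetProd_of_eq_zero
    (fun j _ => differentiableAt_coord j x) (Finset.mem_univ i) hx) (Pi.single k 1)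

lemma curl3_bubble_smul_of_coord_eq_zero {r : Vec → Vec} {i : Fin 4} {x : Vec}
    (hr : DifferentiableAt ℝ r x) (hx : T.affineBasis.coord i x = 0) :
    curl3 (fun y => T.bubble y • r y) x
      = (∏ j ∈ Finset.univ.erase i, T.affineBasis.coord j x) •
          cross3 (grad3 (T.affineBasis.coord i) x) (r x) := by
  rw [curl3_smul (differentiableAt_bubble x) hr, bubble_eq_zero hx, zero_smul, zero_add,
    grad3_bubble_of_coord_eq_zero hx, cross3_eq_crossProduct, cross3_eq_crossProduct, map_smul,
    LinearMap.smul_apply]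

lemma curl3_bubble_smul_vtx {r : Vec → Vec} {a : Fin 4} (hr : DifferentiableAt ℝ r (T.vtx a)) :
    curl3 (fun y => T.bubble y • r y) (T.vtx a) = 0 := by
  have hcoord {i : Fin 4} (hi : i ≠ a) : T.affineBasis.coord i (T.vtx a) = 0 :=
    T.affineBasis.coord_apply_ne hi
  obtain ⟨i, hia⟩ := exists_ne a
  obtain ⟨j, hja, hji⟩ := Fin.exists_ne_and_ne_of_two_lt a i (by norm_num)
  rw [curl3_bubble_smul_of_coord_eq_zero hr (hcoord hia),
    Finset.prod_eq_zero (Finset.mem_erase.mpr ⟨hji, Finset.mem_univ j⟩) (hcoord hja),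
    zero_smul]

lemma cross3_grad3_coord_eq_zero_of_pos {r : Vec → Vec} {i : Fin 4} {x : Vec}
    (hr : DifferentiableAt ℝ r x) (hcurl : ∀ y ∈ T.K, curl3 (fun z => T.bubble z • r z) y = 0)
    (hx : T.affineBasis.coord i x = 0) (hpos : ∀ j ≠ i, 0 < T.affineBasis.coord j x) :
    cross3 (grad3 (T.affineBasis.coord i) x) (r x) = 0 := by
  have hxK : x ∈ T.K := mem_K_iff.mpr fun j => by
    rcases eq_or_ne j i with rfl | hj
    exacts [hx.ge, (hpos j hj).le]
  have hprod : 0 < ∏ j ∈ Finset.univ.erase i, T.affineBasis.coord j x :=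
    Finset.prod_pos fun j hj => hpos j (Finset.ne_of_mem_erase hj)
  have := hcurl x hxK
  rw [curl3_bubble_smul_of_coord_eq_zero hr hx] at this
  exact (smul_eq_zero.mp this).resolve_left hprod.ne'

lemma exists_coord_eq_zero_and_coord_pos (i : Fin 4) :
    ∃ m, T.affineBasis.coord i m = 0 ∧ ∀ j ≠ i, 0 < T.affineBasis.coord j m := by
  have hcard : (Finset.univ.erase i).card = 3 := by simp
  have hsum := (Finset.univ.erase i).sum_centroidWeights_eq_one_of_card_eq_add_one ℝ hcard
  refine ⟨(Finset.univ.erase i).centroid ℝ T.affineBasis, ?_, fun j hj => ?_⟩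
  · exact T.affineBasis.coord_apply_combination_of_notMem (Finset.notMem_erase i _) hsum
  · rw [T.affineBasis.coord_apply_centroid (Finset.mem_erase.mpr ⟨hj, Finset.mem_univ j⟩), hcard]
    norm_num

lemma cross3_grad3_coord_apply_vtx_eq_zero {r : Vec →ᵃ[ℝ] Vec}
    (hcurl : ∀ x ∈ T.K, curl3 (fun y => T.bubble y • r y) x = 0) {i a : Fin 4} (hia : i ≠ a)
    (x : Vec) : cross3 (grad3 (T.affineBasis.coord i) x) (r (T.vtx a)) = 0 := by
  have hface {y : Vec} (hy : T.affineBasis.coord i y = 0)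
      (hpos : ∀ j ≠ i, 0 < T.affineBasis.coord j y) :
      crossProduct (grad3 (T.affineBasis.coord i) x) (r y) = 0 := by
    rw [← cross3_eq_crossProduct, grad3_affineMap_eq _ x y]
    exact cross3_grad3_coord_eq_zero_of_pos (hasFDerivAt_affineMap r y).differentiableAt
      hcurl hy hpos
  -- The vertex itself gives nothing, as the curl of `b r` vanishes there for every `r`. But `m` and
  -- its midpoint with the vertex lie inside the face, and `∇λᵢ × r` is affine along that line.
  obtain ⟨m, hm, hmpos⟩ := exists_coord_eq_zero_and_coord_pos (T := T) i
  have hcoord (j : Fin 4) : T.affineBasis.coord j (midpoint ℝ (T.vtx a) m)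
      = midpoint ℝ (if j = a then 1 else 0) (T.affineBasis.coord j m) := by
    rw [AffineMap.map_midpoint]
    exact congrArg (midpoint ℝ · _) (T.affineBasis.coord_apply j a)
  have hmid := hface (y := midpoint ℝ (T.vtx a) m) (by simp [hcoord, hm, hia]) fun j hj => by
    have hδ : (0 : ℝ) ≤ if j = a then 1 else 0 := by split_ifs <;> norm_num
    rw [hcoord, midpoint_eq_smul_add, invOf_eq_inv]
    exact smul_pos (by norm_num) (add_pos_of_nonneg_of_pos hδ (hmpos j hj))
  rw [AffineMap.map_midpoint, midpoint_eq_smul_add, map_smul, map_add, hface hm hmpos, add_zero,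
    smul_eq_zero] at hmid
  rw [cross3_eq_crossProduct]
  exact hmid.resolve_left (by norm_num)

theorem eq_zero_of_curl3_bubble_smul_eq_zero {r : Vec →ᵃ[ℝ] Vec}
    (hcurl : ∀ x ∈ T.K, curl3 (fun y => T.bubble y • r y) x = 0) : r = 0 := by
  refine affineMap_ext (T := T) fun a => ?_
  obtain ⟨i, hia⟩ := exists_ne a
  obtain ⟨j, hja, hji⟩ := Fin.exists_ne_and_ne_of_two_lt a i (by norm_num)
  refine eq_zero_of_cross3_eq_zero (f := T.vtx j - T.vtx a) (grad3_coord_ne_zero i 0)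
    (cross3_grad3_coord_apply_vtx_eq_zero hcurl hia 0)
    (cross3_grad3_coord_apply_vtx_eq_zero hcurl hja 0) ?_ ?_
  · simp [dot3_grad3_coord, hia, hji.symm]
  · simp [dot3_grad3_coord, hja]

theorem curl3_cross3_add_bubble_smul (p r : Vec →ᵃ[ℝ] Vec) (x : Vec) :
    curl3 (fun y => cross3 y (p y) + T.bubble y • r y) x
      = curlCross3 p x + curl3 (fun y => T.bubble y • r y) x := by
  have hp := (hasFDerivAt_affineMap p x).differentiableAt
  have hr := (hasFDerivAt_affineMap r x).differentiableAt
  rw [curl3_add (differentiableAt_cross3 differentiableAt_fun_id hp)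
    ((differentiableAt_bubble x).fun_smul hr), curl3_cross3_affineMap]

theorem curlCross3_eq_zero_of_curl3_eq_zero {p r : Vec →ᵃ[ℝ] Vec}
    (hcurl : ∀ x ∈ T.K, curl3 (fun y => cross3 y (p y) + T.bubble y • r y) x = 0) :
    curlCross3 p = 0 := by
  refine affineMap_ext (T := T) fun a => ?_
  have := hcurl _ (vtx_mem_K a)
  rwa [curl3_cross3_add_bubble_smul,
    curl3_bubble_smul_vtx (hasFDerivAt_affineMap r _).differentiableAt, add_zero] at this

end Tetra

/-- Let `K` be a tetrahedron with barycentric coordinates `λ₁,…,λ₄` and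
bubble `b_K = λ₁λ₂λ₃λ₄`. If `v ∈ x × P₁(K;ℝ³) + b_K·P₁(K;ℝ³)` and `curl v = 0` on `K`,
then `v = 0` on `K`. -/
theorem statement0 (T : Tetra) (lam : Fin 4 → Vec → ℝ) (hlam : T.IsBary lam)
    (p r : Vec → Vec) (hp : VPolyDeg 1 p) (hr : VPolyDeg 1 r)
    (v : Vec → Vec) (hv : ∀ x, v x = cross3 x (p x) + (∏ i, lam i x) • r x)
    (hcurl : ∀ x ∈ T.K, curl3 v x = 0) :
    ∀ x ∈ T.K, v x = 0 := by
  obtain ⟨p, rfl⟩ := hp.exists_affineMap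
  obtain ⟨r, rfl⟩ := hr.exists_affineMap
  obtain rfl : v = fun x => cross3 x (p x) + T.bubble x • r x := by
    ext1 x
    simp only [hv, hlam.eq_coord, Tetra.bubble]
  have hp0 : curlCross3 p = 0 := Tetra.curlCross3_eq_zero_of_curl3_eq_zero hcurl
  have hr0 : r = 0 := Tetra.eq_zero_of_curl3_bubble_smul_eq_zero fun x hx => by
    simpa only [Tetra.curl3_cross3_add_bubble_smul, hp0, AffineMap.coe_zero, Pi.zero_apply,
      zero_add] using hcurl x hx
  intro x _
  simp only [cross3_eq_zero_of_curlCross3_eq_zero hp0, hr0, AffineMap.coe_zero, Pi.zero_apply,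
    smul_zero, add_zero]
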